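/- For every n ∈ ℤ, the function t ↦ K_n^α(t,1) has a logarithmic singularity at t = 1: there exists a function G, real-analytic on [1/2, 3/2], such that the function t ↦ K_n^α(t,1) − G(t) · log|1−t|, defined for t ∈ [1/2, 3/2] with t ≠ 1, extends to a real-analytic function on [1/2, 3/2]. (Here K_n^α(t,1) is real-valued, by the symmetry θ ↦ −θ of the θ-integral.) -/

import Mathlib

open Real

/-- Parametrization of the infinite straight cone of opening angle `2α`. -/
noncomputable def coneParam (α t θ : ℝ) : EuclideanSpace ℝ (Fin 3) :=
  !₂[sin α * t * cos θ, sin α * t * sin θ, cos α * t]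

/-- Outward unit normal of the cone. -/
noncomputable def coneNormal (α θ : ℝ) : EuclideanSpace ℝ (Fin 3) :=
  !₂[cos α * cos θ, cos α * sin θ, -sin α]

/-- The layer-potential kernel of the infinite straight cone. -/
noncomputable def coneKernel (α t θ t' θ' : ℝ) : ℝ :=
  (inner ℝ (coneParam α t θ - coneParam α t' θ') (coneNormal α θ) : ℝ) /
    ‖coneParam α t' θ' - coneParam α t θ‖ ^ 3

/-- The `n`-th modal kernel `K_n^α(t,t') = (1/(2π)) ∫₀^{2π} e^{−inθ} K^{Γ_α}(t,θ,t',0) dθ`. -/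
noncomputable def modalKernel (α : ℝ) (n : ℤ) (t t' : ℝ) : ℂ :=
  ((1 / (2 * π) : ℝ) : ℂ) *
    ∫ θ in (0:ℝ)..(2 * π), Complex.exp (-Complex.I * (n : ℂ) * (θ : ℂ)) * (coneKernel α t θ t' 0 : ℂ)

/-!
After `θ = 2 φ`, and since the kernel is even in `θ`, `K_n^α(t, t')` is an analytic function of `t`
times `∫₀^{π/2} T_n(1 - 2 sin² φ) sin² φ (z + sin² φ)^{-3/2} dφ` at
`z = (t - t')² / (4 sin² α t t')`. Expanding the Chebyshev polynomial leaves the moments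
`I_k(z) = ∫₀^{π/2} sin^{2k} φ (z + sin² φ)^{-1/2} dφ` and `z I_k'(z)`, and integrating the
derivative of `sin^{2k+1} φ cos φ (z + sin² φ)^{-1/2}` expresses `I_{k+1}` through `I_k` and
`z I_k'`. All of this preserves the form `A(z) log z + B(z)` with `A`, `B` analytic on `[0, ∞)`,
and substituting `log z = 2 log |t' - t| - log (4 sin² α t t')` gives the theorem.

For `I_0`, insert `π/2 = ∫₀^{π/2} cos φ / (1 - sin² ψ sin² φ) dψ` and swap the integrals: the
`φ`-integral is elementary, and what remains is `log z` and integrals over `ψ` of functions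
holomorphic in `Re z > -1`.
-/

section ParametricIntegral

open MeasureTheory Set Filter Topology

theorem aestronglyMeasurable_of_hasDerivAt {X 𝕜 E : Type*} [MeasurableSpace X]
    {μ : Measure X} [NontriviallyNormedField 𝕜] [NormedAddCommGroup E] [NormedSpace 𝕜 E]
    {F : 𝕜 → X → E} {F' : X → E} {z₀ : 𝕜}
    (hF : ∀ᶠ z in 𝓝 z₀, AEStronglyMeasurable (F z) μ)
    (hF' : ∀ᵐ x ∂μ, HasDerivAt (fun z => F z x) (F' x) z₀) :
    AEStronglyMeasurable F' μ := by
  obtain ⟨u, hu⟩ := exists_seq_tendsto (𝓝[≠] z₀)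
  obtain ⟨N, hN⟩ := eventually_atTop.1 (hu.eventually (hF.filter_mono nhdsWithin_le_nhds))
  refine aestronglyMeasurable_of_tendsto_ae atTop
    (f := fun n x => slope (fun z => F z x) z₀ (u (n + N))) (fun n => ?_) ?_
  · exact ((hN _ (Nat.le_add_left N n)).sub hF.self_of_nhds).const_smul _
  · filter_upwards [hF'] with x hx
    exact hx.tendsto_slope.comp (hu.comp (tendsto_add_atTop_nat N))

theorem norm_deriv_le_of_forall_mem_closedBall {E : Type*} [NormedAddCommGroup E]
    [NormedSpace ℂ E] {f : ℂ → E} {z₀ z : ℂ} {r C : ℝ} (hr : 0 < r)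
    (hf : DifferentiableOn ℂ f (Metric.closedBall z₀ (r + r)))
    (hC : ∀ z ∈ Metric.closedBall z₀ (r + r), ‖f z‖ ≤ C) (hz : z ∈ Metric.ball z₀ r) :
    ‖deriv f z‖ ≤ C / r := by
  have hsub : Metric.closedBall z r ⊆ Metric.closedBall z₀ (r + r) :=
    Metric.closedBall_subset_closedBall' (by linarith [Metric.mem_ball.1 hz])
  refine Complex.norm_deriv_le_of_forall_mem_sphere_norm_le hr
    (DifferentiableOn.diffContOnCl ?_) fun x hx => hC x (hsub (Metric.sphere_subset_closedBall hx))
  rw [closure_ball _ hr.ne']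
  exact hf.mono hsub

variable {X : Type*} [TopologicalSpace X] [MeasurableSpace X] [OpensMeasurableSpace X]
  {μ : Measure X} {K : Set X} {U : Set ℂ}

theorem differentiableOn_integral_smul {E : Type*} [NormedAddCommGroup E] [NormedSpace ℂ E]
    {g : ℂ → X → E} {w : X → ℂ} (hU : IsOpen U) (hK : IsCompact K) (hKm : MeasurableSet K)
    (hgc : ContinuousOn (Function.uncurry g) (U ×ˢ K))
    (hgd : ∀ x ∈ K, DifferentiableOn ℂ (fun z => g z x) U) (hw : IntegrableOn w K μ) :
    DifferentiableOn ℂ (fun z => ∫ x in K, w x • g z x ∂μ) U := by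
  intro z₀ hz₀
  obtain ⟨R, hR, hRU⟩ := Metric.nhds_basis_closedBall.mem_iff.1 (hU.mem_nhds hz₀)
  obtain ⟨r, hr, rfl⟩ : ∃ r, 0 < r ∧ r + r = R := ⟨R / 2, half_pos hR, add_halves R⟩
  obtain ⟨C, hC⟩ := ((isCompact_closedBall z₀ (r + r)).prod hK).exists_bound_of_continuousOn
    (hgc.mono (prod_mono hRU subset_rfl))
  have hg_meas (z) (hz : z ∈ U) : AEStronglyMeasurable (g z) (μ.restrict K) :=
    (hgc.comp (by fun_prop) fun x hx => ⟨hz, hx⟩ :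
      ContinuousOn (fun x => Function.uncurry g (z, x)) K).aestronglyMeasurable_of_isCompact hK hKm
  have hder (x) (hx : x ∈ K) (z) (hz : z ∈ U) :
      HasDerivAt (fun z => w x • g z x) (w x • deriv (fun z => g z x) z) z :=
    (((hgd x hx).differentiableAt (hU.mem_nhds hz)).hasDerivAt).const_smul _
  have hbound (x) (hx : x ∈ K) (z) (hz : z ∈ Metric.ball z₀ r) :
      ‖w x • deriv (fun z => g z x) z‖ ≤ ‖w x‖ * (C / r) := by
    rw [norm_smul]
    gcongr
    exact norm_deriv_le_of_forall_mem_closedBall hr ((hgd x hx).mono hRU)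
      (fun ζ hζ => hC (ζ, x) ⟨hζ, hx⟩) hz
  have hF_meas : ∀ᶠ z in 𝓝 z₀, AEStronglyMeasurable (fun x => w x • g z x) (μ.restrict K) := by
    filter_upwards [hU.mem_nhds hz₀] with z hz
    exact hw.aestronglyMeasurable.smul (hg_meas z hz)
  have hF_int : IntegrableOn (fun x => w x • g z₀ x) K μ :=
    hw.smul_bdd C (hg_meas z₀ hz₀) (ae_restrict_of_forall_mem hKm fun x hx =>
      hC (z₀, x) ⟨Metric.mem_closedBall_self hR.le, hx⟩)
  refine (hasDerivAt_integral_of_dominated_loc_of_deriv_le (Metric.ball_mem_nhds z₀ hr) hF_meas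
    hF_int (aestronglyMeasurable_of_hasDerivAt hF_meas ?_) (ae_restrict_of_forall_mem hKm hbound)
    (hw.norm.mul_const _)
    (ae_restrict_of_forall_mem hKm fun x hx z hz => hder x hx z
      (hRU (Metric.ball_subset_closedBall.trans
        (Metric.closedBall_subset_closedBall (by linarith)) hz)))
    ).2.differentiableAt.differentiableWithinAt
  exact ae_restrict_of_forall_mem hKm fun x hx => hder x hx z₀ hz₀

theorem analyticOnNhd_integral_mul_of_complex_extension {g : ℂ → X → ℂ} {h : ℝ → X → ℝ}
    {w : X → ℝ} (hU : IsOpen U) (hK : IsCompact K) (hKm : MeasurableSet K)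
    (hgc : ContinuousOn (Function.uncurry g) (U ×ˢ K))
    (hgd : ∀ x ∈ K, DifferentiableOn ℂ (fun z => g z x) U)
    (hgh : ∀ t : ℝ, (t : ℂ) ∈ U → ∀ x ∈ K, g t x = h t x) (hw : IntegrableOn w K μ) :
    AnalyticOnNhd ℝ (fun t => ∫ x in K, w x * h t x ∂μ) (Complex.ofReal ⁻¹' U) := by
  have hanalytic : AnalyticOnNhd ℝ
      (fun t : ℝ => (∫ x in K, (w x : ℂ) • g t x ∂μ).re) (Complex.ofReal ⁻¹' U) :=
    AnalyticOnNhd.re_ofReal (((differentiableOn_integral_smul hU hK hKm hgc hgd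
      hw.ofReal).analyticOnNhd hU).mono (image_preimage_subset _ _))
  refine hanalytic.congr (hU.preimage Complex.continuous_ofReal) fun t ht => ?_
  have hreal : ∫ x in K, (w x : ℂ) • g t x ∂μ = ∫ x in K, ((w x * h t x : ℝ) : ℂ) ∂μ :=
    setIntegral_congr_fun hKm fun x hx => by simp [hgh t ht x hx]
  simp only [hreal, integral_complex_ofReal, Complex.ofReal_re]

end ParametricIntegral

section CompleteEllipticIntegral

open MeasureTheory Set Interval

variable {a s z : ℝ}

theorem cos_sq_add_mul_sin_sq_pos (ha : 0 < a) (ψ : ℝ) : 0 < cos ψ ^ 2 + a * sin ψ ^ 2 := by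
  rcases eq_or_ne (sin ψ) 0 with h | h
  · rw [cos_sq', h]
    norm_num
  · positivity

-- The primitive is `arctan (a * tan ψ) / a`, continued through `ψ = π / 2` by the addition formula.
theorem hasDerivAt_sub_arctan_div (ha : 0 < a) (ψ : ℝ) :
    HasDerivAt
      (fun ψ => (ψ - arctan ((1 - a) * sin ψ * cos ψ / (cos ψ ^ 2 + a * sin ψ ^ 2))) / a)
      (cos ψ ^ 2 + a ^ 2 * sin ψ ^ 2)⁻¹ ψ := by
  have hden := (cos_sq_add_mul_sin_sq_pos ha ψ).ne'
  have hden' := (cos_sq_add_mul_sin_sq_pos (pow_pos ha 2) ψ).ne'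
  have hs := hasDerivAt_sin ψ
  have hc := hasDerivAt_cos ψ
  have hquot := ((hs.const_mul (1 - a)).fun_mul hc).fun_div
    ((hc.fun_pow 2).fun_add ((hs.fun_pow 2).const_mul a)) hden
  refine (((hasDerivAt_id ψ).fun_sub hquot.arctan).div_const a).congr_deriv ?_
  have hsin : sin ψ ^ 2 = 1 - cos ψ ^ 2 := sin_sq ψ
  have hone_add : 1 + ((1 - a) * sin ψ * cos ψ / (cos ψ ^ 2 + a * sin ψ ^ 2)) ^ 2
      = (cos ψ ^ 2 + a ^ 2 * sin ψ ^ 2) / (cos ψ ^ 2 + a * sin ψ ^ 2) ^ 2 := by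
    field_simp
    rw [hsin]
    ring
  rw [hone_add]
  field_simp
  have hsin4 : sin ψ ^ 4 = (1 - cos ψ ^ 2) ^ 2 := by rw [← hsin]; ring
  ring_nf
  rw [hsin4, hsin]
  ring

theorem integral_inv_cos_sq_add_sq_mul_sin_sq (ha : 0 < a) :
    ∫ ψ in (0 : ℝ)..(π / 2), (cos ψ ^ 2 + a ^ 2 * sin ψ ^ 2)⁻¹ = π / (2 * a) := by
  have hcont : Continuous fun ψ => (cos ψ ^ 2 + a ^ 2 * sin ψ ^ 2)⁻¹ :=
    Continuous.inv₀ (by fun_prop) fun ψ => (cos_sq_add_mul_sin_sq_pos (pow_pos ha 2) ψ).ne'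
  rw [intervalIntegral.integral_eq_sub_of_hasDerivAt
    (fun ψ _ => hasDerivAt_sub_arctan_div ha ψ) (hcont.intervalIntegrable _ _)]
  simp only [sin_pi_div_two, cos_pi_div_two, sin_zero, mul_zero, zero_mul, zero_div, arctan_zero,
    sub_zero]
  field_simp

theorem sqrt_add_sq_sq (hz : 0 < z) (x : ℝ) : √(z + x ^ 2) ^ 2 = z + x ^ 2 :=
  sq_sqrt (by positivity)

theorem abs_sqrt_mul_lt_sqrt_add_sq (hz : 0 < z) (hs : 0 ≤ s) {x : ℝ} (hx : s * x ^ 2 < 1) :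
    |√(1 + s * z) * x| < √(z + x ^ 2) := by
  refine abs_lt_of_sq_lt_sq ?_ (sqrt_nonneg _)
  rw [sqrt_add_sq_sq hz, mul_pow, sq_sqrt (by positivity)]
  nlinarith

theorem hasDerivAt_log_sub_log_div (hz : 0 < z) (hs : 0 ≤ s) {x : ℝ} (hx : s * x ^ 2 < 1) :
    HasDerivAt
      (fun x => (log (√(z + x ^ 2) + √(1 + s * z) * x) - log (√(z + x ^ 2) - √(1 + s * z) * x))
        / (2 * √(1 + s * z)))
      (√(z + x ^ 2) * (1 - s * x ^ 2))⁻¹ x := by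
  obtain ⟨hlo, hhi⟩ := abs_lt.1 (abs_sqrt_mul_lt_sqrt_add_sq hz hs hx)
  have hq : 0 < √(1 + s * z) := by positivity
  have hq_sq : √(1 + s * z) ^ 2 = 1 + s * z := sq_sqrt (by positivity)
  have hΔ : 0 < √(z + x ^ 2) := by positivity
  have hΔ_sq := sqrt_add_sq_sq hz x
  have hplus : √(z + x ^ 2) + √(1 + s * z) * x ≠ 0 := by linarith
  have hminus : √(z + x ^ 2) - √(1 + s * z) * x ≠ 0 := by linarith
  have hsqrt := ((hasDerivAt_pow 2 x).const_add z).sqrt (by positivity)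
  have hlin := (hasDerivAt_id x).const_mul √(1 + s * z)
  refine ((((hsqrt.fun_add hlin).log hplus).fun_sub
    ((hsqrt.fun_sub hlin).log hminus)).div_const _).congr_deriv ?_
  generalize √(z + x ^ 2) = Δ at *
  generalize √(1 + s * z) = q at *
  have hfactor : 1 - s * x ^ 2 = (Δ + q * x) * (Δ - q * x) / z := by
    field_simp
    linear_combination x ^ 2 * hq_sq - hΔ_sq
  rw [hfactor]
  simp only [id]
  field_simp
  push_cast
  linear_combination 4 * q * hΔ_sq

theorem integral_inv_sqrt_add_sq_mul (hz : 0 < z) (hs0 : 0 ≤ s) (hs1 : s < 1) :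
    ∫ x in (0 : ℝ)..1, (√(z + x ^ 2) * (1 - s * x ^ 2))⁻¹ =
      (√(1 + s * z))⁻¹ * (log (√(1 + z) + √(1 + s * z)) - log z / 2 - log (1 - s) / 2) := by
  have hlt : ∀ x ∈ uIcc (0 : ℝ) 1, s * x ^ 2 < 1 := by
    intro x hx
    rw [uIcc_of_le zero_le_one] at hx
    nlinarith [pow_le_one₀ (n := 2) hx.1 hx.2]
  have hcont : ContinuousOn (fun x => (√(z + x ^ 2) * (1 - s * x ^ 2))⁻¹) (uIcc 0 1) :=
    ContinuousOn.inv₀ (by fun_prop) fun x hx =>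
      (mul_pos (by positivity) (sub_pos.2 (hlt x hx))).ne'
  rw [intervalIntegral.integral_eq_sub_of_hasDerivAt
    (fun x hx => hasDerivAt_log_sub_log_div hz hs0 (hlt x hx)) hcont.intervalIntegrable]
  have hsum : 0 < √(1 + z) + √(1 + s * z) := by positivity
  have hs1' : 0 < 1 - s := sub_pos.2 hs1
  have hdiff : √(1 + z) - √(1 + s * z) = z * (1 - s) / (√(1 + z) + √(1 + s * z)) := by
    rw [eq_div_iff hsum.ne']
    linear_combination sq_sqrt (by positivity : 0 ≤ 1 + z) - sq_sqrt (by positivity : 0 ≤ 1 + s * z)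
  simp only [one_pow, mul_one, add_comm z 1, hdiff, log_div (mul_pos hz hs1').ne' hsum.ne',
    log_mul hz.ne' hs1'.ne', mul_zero, add_zero, sub_zero, sub_self, zero_div]
  field_simp
  ring

/-- The two-variable integrand linking the elliptic integral `∫ dφ / √(z + sin² φ)` to an integral
that is analytic in `z` up to a logarithm: integrating out `ψ` gives the former, integrating out
`φ` the latter. -/
noncomputable def ellipticKernel (z φ ψ : ℝ) : ℝ :=
  cos φ / (√(z + sin φ ^ 2) * (1 - sin ψ ^ 2 * sin φ ^ 2))

theorem cos_pos_of_mem_Ioo_zero_pi_div_two {φ : ℝ} (hφ : φ ∈ Ioo 0 (π / 2)) : 0 < cos φ :=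
  cos_pos_of_mem_Ioo ⟨by linarith [hφ.1, pi_pos], hφ.2⟩

theorem sin_sq_lt_one_of_mem_Ioo {φ : ℝ} (hφ : φ ∈ Ioo 0 (π / 2)) : sin φ ^ 2 < 1 := by
  rw [sin_sq]
  linarith [pow_pos (cos_pos_of_mem_Ioo_zero_pi_div_two hφ) 2]

theorem one_sub_sin_sq_mul_sin_sq_pos {φ : ℝ} (hφ : φ ∈ Ioo 0 (π / 2)) (ψ : ℝ) :
    0 < 1 - sin ψ ^ 2 * sin φ ^ 2 := by
  nlinarith [sin_sq_lt_one_of_mem_Ioo hφ, sin_sq_le_one ψ, sq_nonneg (sin ψ), sq_nonneg (sin φ)]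

theorem integral_ellipticKernel_right (z : ℝ) {φ : ℝ} (hφ : φ ∈ Ioo 0 (π / 2)) :
    ∫ ψ in (0 : ℝ)..(π / 2), ellipticKernel z φ ψ = π / 2 * (√(z + sin φ ^ 2))⁻¹ := by
  have hcos := cos_pos_of_mem_Ioo_zero_pi_div_two hφ
  have hfactor (ψ : ℝ) : ellipticKernel z φ ψ =
      cos φ / √(z + sin φ ^ 2) * (cos ψ ^ 2 + cos φ ^ 2 * sin ψ ^ 2)⁻¹ := by
    rw [ellipticKernel, div_mul_eq_div_div, div_eq_mul_inv (cos φ / _), cos_sq' ψ, cos_sq' φ]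
    ring_nf
  simp only [hfactor]
  rw [intervalIntegral.integral_const_mul, integral_inv_cos_sq_add_sq_mul_sin_sq hcos]
  field_simp

theorem integral_ellipticKernel_left (hz : 0 < z) {ψ : ℝ} (hψ : ψ ∈ Ioo 0 (π / 2)) :
    ∫ φ in (0 : ℝ)..(π / 2), ellipticKernel z φ ψ = (√(1 + sin ψ ^ 2 * z))⁻¹ *
      (log (√(1 + z) + √(1 + sin ψ ^ 2 * z)) - log z / 2 - log (cos ψ)) := by
  have hsin := sin_sq_lt_one_of_mem_Ioo hψ
  have hlt : ∀ x ∈ sin '' uIcc 0 (π / 2), sin ψ ^ 2 * x ^ 2 < 1 := by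
    rintro _ ⟨φ, -, rfl⟩
    nlinarith [sin_sq_le_one φ, sq_nonneg (sin φ), sq_nonneg (sin ψ)]
  have hcont : ContinuousOn (fun x => (√(z + x ^ 2) * (1 - sin ψ ^ 2 * x ^ 2))⁻¹)
      (sin '' uIcc 0 (π / 2)) :=
    ContinuousOn.inv₀ (by fun_prop) fun x hx =>
      (mul_pos (by positivity) (sub_pos.2 (hlt x hx))).ne'
  have hsubst := intervalIntegral.integral_comp_mul_deriv' (a := 0) (b := π / 2)
    (fun φ _ => hasDerivAt_sin φ) continuous_cos.continuousOn hcont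
  rw [sin_zero, sin_pi_div_two, integral_inv_sqrt_add_sq_mul hz (sq_nonneg _) hsin, ← cos_sq',
    log_pow, Nat.cast_ofNat, mul_div_cancel_left₀ _ two_ne_zero] at hsubst
  rw [← hsubst]
  congr 1 with φ
  rw [ellipticKernel, Function.comp_apply, div_eq_inv_mul]

theorem integrableOn_ellipticKernel (hz : 0 < z) :
    IntegrableOn (Function.uncurry (ellipticKernel z)) (Ι 0 (π / 2) ×ˢ Ι 0 (π / 2)) := by
  have hle : (0 : ℝ) ≤ π / 2 := by positivity
  have hmem : ∀ᵐ φ ∂volume.restrict (Ioc 0 (π / 2)), φ ∈ Ioo 0 (π / 2) := by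
    rw [← restrict_Ioo_eq_restrict_Ioc]
    exact ae_restrict_mem measurableSet_Ioo
  have hmeas : Measurable (Function.uncurry (ellipticKernel z)) := by
    unfold ellipticKernel
    fun_prop
  rw [uIoc_of_le hle, IntegrableOn, Measure.volume_eq_prod, ← Measure.prod_restrict,
    integrable_prod_iff hmeas.aestronglyMeasurable]
  constructor
  · filter_upwards [hmem] with φ hφ
    have hcont : Continuous (ellipticKernel z φ) :=
      Continuous.div (by fun_prop) (by fun_prop) fun ψ =>
        (mul_pos (by positivity) (one_sub_sin_sq_mul_sin_sq_pos hφ ψ)).ne'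
    exact hcont.integrableOn_Ioc
  · have hcont : Continuous fun φ => π / 2 * (√(z + sin φ ^ 2))⁻¹ :=
      continuous_const.mul (Continuous.inv₀ (by fun_prop) fun φ => by positivity)
    refine hcont.integrableOn_Ioc.congr ?_
    filter_upwards [hmem] with φ hφ
    rw [← integral_ellipticKernel_right z hφ, intervalIntegral.integral_of_le hle]
    congr 1 with ψ
    have hcos := cos_pos_of_mem_Ioo_zero_pi_div_two hφ
    have hden := one_sub_sin_sq_mul_sin_sq_pos hφ ψ
    exact (norm_of_nonneg (by unfold ellipticKernel; positivity)).symm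

theorem integral_inv_sqrt_add_sin_sq (hz : 0 < z) :
    ∫ φ in (0 : ℝ)..(π / 2), (√(z + sin φ ^ 2))⁻¹ = 2 / π *
      ∫ ψ in (0 : ℝ)..(π / 2), (√(1 + sin ψ ^ 2 * z))⁻¹ *
        (log (√(1 + z) + √(1 + sin ψ ^ 2 * z)) - log z / 2 - log (cos ψ)) := by
  have hle : (0 : ℝ) ≤ π / 2 := by positivity
  calc ∫ φ in (0 : ℝ)..(π / 2), (√(z + sin φ ^ 2))⁻¹
    _ = 2 / π * ∫ φ in (0 : ℝ)..(π / 2), π / 2 * (√(z + sin φ ^ 2))⁻¹ := by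
      rw [intervalIntegral.integral_const_mul]
      field_simp
    _ = 2 / π * ∫ φ in (0 : ℝ)..(π / 2), ∫ ψ in (0 : ℝ)..(π / 2), ellipticKernel z φ ψ := by
      rw [intervalIntegral.integral_congr_Ioo_of_le hle fun φ hφ =>
        integral_ellipticKernel_right z hφ]
    _ = 2 / π * ∫ ψ in (0 : ℝ)..(π / 2), ∫ φ in (0 : ℝ)..(π / 2), ellipticKernel z φ ψ := by
      rw [intervalIntegral_intervalIntegral_swap (integrableOn_ellipticKernel hz)]
    _ = _ := by
      rw [intervalIntegral.integral_congr_Ioo_of_le hle fun ψ hψ =>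
        integral_ellipticKernel_left hz hψ]

end CompleteEllipticIntegral

section LogAnalytic

open Set

/-- `f` has at most a logarithmic singularity at `0⁺`: on `(0, ∞)` it equals `A z * log z + B z`
with `A` and `B` real-analytic on a neighbourhood of `[0, ∞)`. -/
def IsLogAnalytic (f : ℝ → ℝ) : Prop :=
  ∃ A B : ℝ → ℝ, AnalyticOnNhd ℝ A (Ici 0) ∧ AnalyticOnNhd ℝ B (Ici 0) ∧
    ∀ z, 0 < z → f z = A z * log z + B z

namespace IsLogAnalytic

variable {f g : ℝ → ℝ}

theorem add (hf : IsLogAnalytic f) (hg : IsLogAnalytic g) :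
    IsLogAnalytic (fun z => f z + g z) := by
  obtain ⟨A, B, hA, hB, hAB⟩ := hf
  obtain ⟨A', B', hA', hB', hAB'⟩ := hg
  refine ⟨fun z => A z + A' z, fun z => B z + B' z, hA.add hA', hB.add hB', fun z hz => ?_⟩
  simp only [hAB z hz, hAB' z hz]
  ring

theorem analytic_mul (hg : AnalyticOnNhd ℝ g (Ici 0)) (hf : IsLogAnalytic f) :
    IsLogAnalytic (fun z => g z * f z) := by
  obtain ⟨A, B, hA, hB, hAB⟩ := hf
  refine ⟨fun z => g z * A z, fun z => g z * B z, hg.mul hA, hg.mul hB, fun z hz => ?_⟩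
  simp only [hAB z hz]
  ring

theorem congr (hf : IsLogAnalytic f) (hfg : ∀ z, 0 < z → g z = f z) : IsLogAnalytic g := by
  obtain ⟨A, B, hA, hB, hAB⟩ := hf
  exact ⟨A, B, hA, hB, fun z hz => (hfg z hz).trans (hAB z hz)⟩

theorem mul_deriv (hf : IsLogAnalytic f) : IsLogAnalytic (fun z => z * deriv f z) := by
  obtain ⟨A, B, hA, hB, hAB⟩ := hf
  refine ⟨fun z => z * deriv A z, fun z => A z + z * deriv B z, analyticOnNhd_id.mul hA.deriv,
    hA.add (analyticOnNhd_id.mul hB.deriv), fun z hz => ?_⟩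
  have hderiv := (((hA z hz.le).differentiableAt.hasDerivAt.fun_mul (hasDerivAt_log hz.ne')).fun_add
    (hB z hz.le).differentiableAt.hasDerivAt).congr_of_eventuallyEq
      (Filter.eventually_of_mem (Ioi_mem_nhds hz) hAB)
  simp only [hderiv.deriv]
  field_simp
  ring

theorem comp_sq_div (hf : IsLogAnalytic f) {w : ℝ → ℝ} {s : Set ℝ} (hw : AnalyticOnNhd ℝ w s)
    (hw0 : ∀ t ∈ s, 0 < w t) (c : ℝ) :
    ∃ G F : ℝ → ℝ, AnalyticOnNhd ℝ G s ∧ AnalyticOnNhd ℝ F s ∧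
      ∀ t ∈ s, t ≠ c → f ((t - c) ^ 2 / w t) = G t * log |c - t| + F t := by
  obtain ⟨A, B, hA, hB, hAB⟩ := hf
  have hζ : AnalyticOnNhd ℝ (fun t => (t - c) ^ 2 / w t) s :=
    ((analyticOnNhd_id.sub analyticOnNhd_const).pow 2).div hw fun t ht => (hw0 t ht).ne'
  have hmaps : MapsTo (fun t => (t - c) ^ 2 / w t) s (Ici 0) := fun t ht =>
    div_nonneg (sq_nonneg _) (hw0 t ht).le
  have hAζ := hA.comp hζ hmaps
  refine ⟨fun t => 2 * A ((t - c) ^ 2 / w t),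
    fun t => B ((t - c) ^ 2 / w t) - A ((t - c) ^ 2 / w t) * log (w t),
    analyticOnNhd_const.mul hAζ, (hB.comp hζ hmaps).sub (hAζ.mul (hw.log hw0)),
    fun t ht htc => ?_⟩
  have hsub : 0 < (t - c) ^ 2 := pow_two_pos_of_ne_zero (sub_ne_zero.2 htc)
  have hlog : log ((t - c) ^ 2 / w t) = 2 * log |c - t| - log (w t) := by
    rw [log_div hsub.ne' (hw0 t ht).ne', ← sq_abs, abs_sub_comm, log_pow, Nat.cast_ofNat]
  rw [hAB _ (div_pos hsub (hw0 t ht)), hlog]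
  ring

end IsLogAnalytic

end LogAnalytic

section SqrtIntegrals

open MeasureTheory Set

theorem complex_sqrt_ofReal {x : ℝ} (hx : 0 ≤ x) : Complex.sqrt x = (√x : ℂ) := by
  simp [Complex.sqrt_of_nonneg (Complex.zero_le_real.2 hx)]

theorem complex_re_sqrt_pos {w : ℂ} (hw : 0 < w.re) : 0 < (Complex.sqrt w).re := by
  rw [Complex.sqrt, Complex.cpow_inv_two_re]
  positivity

theorem one_add_mul_re_pos {s : ℝ} (hs0 : 0 ≤ s) (hs1 : s ≤ 1) {z : ℂ} (hz : -1 < z.re) :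
    0 < (1 + s * z).re := by
  simp only [Complex.add_re, Complex.one_re, Complex.re_ofReal_mul]
  rcases le_or_gt 0 z.re with h | h
  · positivity
  · nlinarith

/-- The pairs `(z, s)` for which both `1 + z` and `1 + s * z` lie in the right half-plane, where
the principal square root and logarithm are holomorphic. -/
def sqrtDomain : Set (ℂ × ℂ) := {p | 0 < (1 + p.1).re ∧ 0 < (1 + p.2 * p.1).re}

theorem differentiableOn_sqrt_one_add_mul :
    DifferentiableOn ℂ (fun p : ℂ × ℂ => Complex.sqrt (1 + p.2 * p.1)) sqrtDomain :=
  DifferentiableOn.cpow_const (by fun_prop) fun _ hp => Or.inl hp.2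

theorem differentiableOn_inv_sqrt_one_add_mul :
    DifferentiableOn ℂ (fun p : ℂ × ℂ => (Complex.sqrt (1 + p.2 * p.1))⁻¹) sqrtDomain :=
  differentiableOn_sqrt_one_add_mul.fun_inv fun _ hp h =>
    (complex_re_sqrt_pos hp.2).ne' (by rw [h, Complex.zero_re])

theorem differentiableOn_inv_sqrt_mul_log_sqrt_add_sqrt :
    DifferentiableOn ℂ (fun p : ℂ × ℂ => (Complex.sqrt (1 + p.2 * p.1))⁻¹ *
      Complex.log (Complex.sqrt (1 + p.1) + Complex.sqrt (1 + p.2 * p.1))) sqrtDomain := by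
  have hsqrt : DifferentiableOn ℂ (fun p : ℂ × ℂ => Complex.sqrt (1 + p.1)) sqrtDomain :=
    DifferentiableOn.cpow_const (by fun_prop) fun _ hp => Or.inl hp.1
  exact differentiableOn_inv_sqrt_one_add_mul.fun_mul
    ((hsqrt.fun_add differentiableOn_sqrt_one_add_mul).clog fun _ hp =>
      Or.inl (add_pos (complex_re_sqrt_pos hp.1) (complex_re_sqrt_pos hp.2)))

theorem analyticOnNhd_integral_mul_sin_sq {g : ℂ × ℂ → ℂ} {h : ℝ → ℝ → ℝ} {w : ℝ → ℝ} {a b : ℝ}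
    (hab : a ≤ b) (hg : DifferentiableOn ℂ g sqrtDomain)
    (hgh : ∀ t : ℝ, -1 < t → ∀ ψ : ℝ, g (t, (sin ψ ^ 2 : ℝ)) = h t ψ)
    (hw : IntervalIntegrable w volume a b) :
    AnalyticOnNhd ℝ (fun t => ∫ ψ in a..b, w ψ * h t ψ) (Ici 0) := by
  set U : Set ℂ := {z | -1 < z.re}
  have hmem (z) (hz : z ∈ U) (ψ : ℝ) : (z, ((sin ψ ^ 2 : ℝ) : ℂ)) ∈ sqrtDomain :=
    ⟨neg_lt_iff_pos_add'.1 hz,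
      one_add_mul_re_pos (sq_nonneg _) (sin_sq_le_one ψ) hz⟩
  have hgc : ContinuousOn (fun p : ℂ × ℝ => g (p.1, (sin p.2 ^ 2 : ℝ))) (U ×ˢ Icc a b) :=
    hg.continuousOn.comp (by fun_prop) fun p hp => hmem p.1 hp.1 p.2
  have hgd (ψ : ℝ) : DifferentiableOn ℂ (fun z => g (z, (sin ψ ^ 2 : ℝ))) U :=
    hg.comp (by fun_prop) fun z hz => hmem z hz ψ
  have hanalytic := analyticOnNhd_integral_mul_of_complex_extension (μ := volume)
    (isOpen_lt continuous_const Complex.continuous_re) isCompact_Icc measurableSet_Icc hgc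
    (fun ψ _ => hgd ψ) (fun t ht ψ _ => hgh t (by simpa using ht) ψ)
    ((intervalIntegrable_iff_integrableOn_Icc_of_le hab).1 hw)
  simp only [integral_Icc_eq_integral_Ioc, ← intervalIntegral.integral_of_le hab] at hanalytic
  refine hanalytic.mono fun t ht => ?_
  have : (-1 : ℝ) < t := neg_one_lt_zero.trans_le ht
  simpa [U] using this

theorem analyticOnNhd_integral_mul_inv_sqrt {w : ℝ → ℝ} {a b : ℝ} (hab : a ≤ b)
    (hw : IntervalIntegrable w volume a b) :
    AnalyticOnNhd ℝ (fun t => ∫ ψ in a..b, w ψ * (√(1 + sin ψ ^ 2 * t))⁻¹) (Ici 0) := by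
  refine analyticOnNhd_integral_mul_sin_sq hab differentiableOn_inv_sqrt_one_add_mul
    (fun t ht ψ => ?_) hw
  have hpos := one_add_mul_re_pos (z := t) (sq_nonneg (sin ψ)) (sin_sq_le_one ψ) ht
  norm_cast at hpos
  dsimp only
  norm_cast
  rw [complex_sqrt_ofReal hpos.le, Complex.ofReal_inv]

theorem analyticOnNhd_integral_mul_inv_sqrt_mul_log {w : ℝ → ℝ} {a b : ℝ} (hab : a ≤ b)
    (hw : IntervalIntegrable w volume a b) :
    AnalyticOnNhd ℝ (fun t => ∫ ψ in a..b, w ψ * ((√(1 + sin ψ ^ 2 * t))⁻¹ *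
      log (√(1 + t) + √(1 + sin ψ ^ 2 * t)))) (Ici 0) := by
  refine analyticOnNhd_integral_mul_sin_sq hab differentiableOn_inv_sqrt_mul_log_sqrt_add_sqrt
    (fun t ht ψ => ?_) hw
  have hpos := one_add_mul_re_pos (z := t) (sq_nonneg (sin ψ)) (sin_sq_le_one ψ) ht
  have hpos' : 0 ≤ 1 + t := by linarith
  norm_cast at hpos
  dsimp only
  norm_cast
  rw [complex_sqrt_ofReal hpos.le, complex_sqrt_ofReal hpos']
  push_cast [Complex.ofReal_log (add_nonneg (sqrt_nonneg (1 + t)) (sqrt_nonneg _))]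
  rfl

theorem isLogAnalytic_integral_inv_sqrt_add_sin_sq :
    IsLogAnalytic fun z => ∫ φ in (0 : ℝ)..(π / 2), (√(z + sin φ ^ 2))⁻¹ := by
  have hle : (0 : ℝ) ≤ π / 2 := by positivity
  have hone : IntervalIntegrable (fun _ : ℝ => (1 : ℝ)) volume 0 (π / 2) := by simp
  have hlogcos : IntervalIntegrable (fun ψ => log (cos ψ)) volume 0 (π / 2) :=
    intervalIntegrable_log_cos
  refine ⟨_, _,
    (analyticOnNhd_const (v := -(1 / π))).mul (analyticOnNhd_integral_mul_inv_sqrt hle hone),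
    (analyticOnNhd_const (v := 2 / π)).mul
      ((analyticOnNhd_integral_mul_inv_sqrt_mul_log hle hone).sub
        (analyticOnNhd_integral_mul_inv_sqrt hle hlogcos)), fun z hz => ?_⟩
  have hinv : Continuous fun ψ => (√(1 + sin ψ ^ 2 * z))⁻¹ :=
    Continuous.inv₀ (by fun_prop) fun ψ => by positivity
  have hlog : Continuous fun ψ => log (√(1 + z) + √(1 + sin ψ ^ 2 * z)) :=
    Continuous.log (by fun_prop) fun ψ => by positivity
  have hint_inv := hinv.intervalIntegrable (μ := volume) 0 (π / 2)
  have hint_log := (hinv.fun_mul hlog).intervalIntegrable (μ := volume) 0 (π / 2)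
  have hint_logcos := hlogcos.mul_continuousOn (hinv.continuousOn (s := uIcc 0 (π / 2)))
  have hsplit (ψ : ℝ) : (√(1 + sin ψ ^ 2 * z))⁻¹ *
      (log (√(1 + z) + √(1 + sin ψ ^ 2 * z)) - log z / 2 - log (cos ψ)) =
      (√(1 + sin ψ ^ 2 * z))⁻¹ * log (√(1 + z) + √(1 + sin ψ ^ 2 * z))
        - (√(1 + sin ψ ^ 2 * z))⁻¹ * (log z / 2) - log (cos ψ) * (√(1 + sin ψ ^ 2 * z))⁻¹ := by
    ring
  simp only [Pi.sub_apply, integral_inv_sqrt_add_sin_sq hz, hsplit, one_mul]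
  rw [intervalIntegral.integral_sub (hint_log.sub (hint_inv.mul_const _)) hint_logcos,
    intervalIntegral.integral_sub hint_log (hint_inv.mul_const _),
    intervalIntegral.integral_mul_const]
  ring

end SqrtIntegrals

section EllipticMoments

open MeasureTheory Set

variable {z : ℝ}

theorem hasDerivAt_div_sqrt_add (w : ℝ) {u : ℝ} (hu : 0 ≤ u) (hz : 0 < z) :
    HasDerivAt (fun z => w / √(z + u)) (-(1 / 2) * (w / √(z + u) ^ 3)) z := by
  have hsqrt := ((hasDerivAt_id' z).add_const u).sqrt (by positivity)
  refine ((hasDerivAt_const z w).fun_div hsqrt (by positivity)).congr_deriv ?_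
  field_simp
  ring

theorem hasDerivAt_integral_div_sqrt_add {w u : ℝ → ℝ} {a b : ℝ}
    (hw : IntervalIntegrable w volume a b) (hu : Measurable u) (hu0 : ∀ φ, 0 ≤ u φ) (hz : 0 < z) :
    HasDerivAt (fun z => ∫ φ in a..b, w φ / √(z + u φ))
      (∫ φ in a..b, -(1 / 2) * (w φ / √(z + u φ) ^ 3)) z := by
  have hmeas (x : ℝ) (k : ℕ) :
      AEStronglyMeasurable (fun φ => w φ / √(x + u φ) ^ k) (volume.restrict (uIoc a b)) :=
    (hw.def'.aestronglyMeasurable.aemeasurable.div (by fun_prop)).aestronglyMeasurable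
  have hdom (k : ℕ) (φ x : ℝ) (hx : z / 2 < x) :
      ‖w φ / √(x + u φ) ^ k‖ ≤ ‖w φ‖ / √(z / 2) ^ k := by
    rw [norm_div, norm_of_nonneg (by positivity : 0 ≤ √(x + u φ) ^ k)]
    gcongr
    linarith [hu0 φ]
  have hz2 : z / 2 < z := half_lt_self hz
  have hmeas1 (x : ℝ) := by simpa only [pow_one] using hmeas x 1
  refine (intervalIntegral.hasDerivAt_integral_of_dominated_loc_of_deriv_le
    (F' := fun x φ => -(1 / 2) * (w φ / √(x + u φ) ^ 3))
    (bound := fun φ => 1 / 2 * (‖w φ‖ / √(z / 2) ^ 3)) (Ioi_mem_nhds hz2)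
    (.of_forall hmeas1) ?_ ((hmeas z 3).const_mul _) ?_ ((hw.norm.div_const _).const_mul _) ?_).2
  · exact (hw.norm.div_const (√(z / 2) ^ 1)).mono_fun (hmeas1 z)
      (.of_forall fun φ => by simpa [abs_of_nonneg] using hdom 1 φ z hz2)
  · refine .of_forall fun φ _ x hx => ?_
    rw [norm_mul, norm_neg, norm_of_nonneg (by norm_num : (0 : ℝ) ≤ 1 / 2)]
    gcongr
    exact hdom 3 φ x hx
  · exact .of_forall fun φ _ x hx => hasDerivAt_div_sqrt_add _ (hu0 φ) ((half_pos hz).trans hx)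

theorem continuous_div_sqrt_add_sin_sq_pow {w : ℝ → ℝ} (hw : Continuous w) (hz : 0 < z) (k : ℕ) :
    Continuous fun φ => w φ / √(z + sin φ ^ 2) ^ k :=
  hw.div (by fun_prop) fun φ => by positivity

/-- The even sine moments of the weight `1 / √(z + sin² φ)` on a quarter period. -/
noncomputable def ellipticMoment (k : ℕ) (z : ℝ) : ℝ :=
  ∫ φ in (0 : ℝ)..(π / 2), sin φ ^ (2 * k) / √(z + sin φ ^ 2)

theorem intervalIntegrable_sin_pow_div_sqrt_pow (k m : ℕ) (hz : 0 < z) (a b : ℝ) :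
    IntervalIntegrable (fun φ => sin φ ^ k / √(z + sin φ ^ 2) ^ m) volume a b :=
  (continuous_div_sqrt_add_sin_sq_pow (by fun_prop) hz m).intervalIntegrable a b

theorem intervalIntegrable_sin_pow_div_sqrt (k : ℕ) (hz : 0 < z) (a b : ℝ) :
    IntervalIntegrable (fun φ => sin φ ^ k / √(z + sin φ ^ 2)) volume a b := by
  simpa only [pow_one] using intervalIntegrable_sin_pow_div_sqrt_pow k 1 hz a b

theorem deriv_ellipticMoment (k : ℕ) (hz : 0 < z) :
    deriv (ellipticMoment k) z =
      -(1 / 2) * ∫ φ in (0 : ℝ)..(π / 2), sin φ ^ (2 * k) / √(z + sin φ ^ 2) ^ 3 := by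
  rw [← intervalIntegral.integral_const_mul]
  exact (hasDerivAt_integral_div_sqrt_add ((continuous_sin.pow _).intervalIntegrable _ _)
    (measurable_sin.pow_const 2) (fun φ => sq_nonneg _) hz).deriv

theorem hasDerivAt_sqrt_add_sin_sq (hz : 0 < z) (φ : ℝ) :
    HasDerivAt (fun φ => √(z + sin φ ^ 2)) (sin φ * cos φ / √(z + sin φ ^ 2)) φ := by
  refine ((((hasDerivAt_sin φ).fun_pow 2).const_add z).sqrt (by positivity)).congr_deriv ?_
  field_simp
  ring

theorem hasDerivAt_sin_pow_mul_cos_div_sqrt (k : ℕ) (hz : 0 < z) (φ : ℝ) :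
    HasDerivAt (fun φ => sin φ ^ (2 * k + 1) * cos φ / √(z + sin φ ^ 2))
      ((2 * k - z) * (sin φ ^ (2 * k) / √(z + sin φ ^ 2))
        - (2 * k + 1) * (sin φ ^ (2 * (k + 1)) / √(z + sin φ ^ 2))
        + z * (1 + z) * (sin φ ^ (2 * k) / √(z + sin φ ^ 2) ^ 3)) φ := by
  have hΔ : 0 < √(z + sin φ ^ 2) := by positivity
  have hΔ_sq := sqrt_add_sq_sq hz (sin φ)
  have hcos : cos φ ^ 2 = 1 - sin φ ^ 2 := cos_sq' φ
  refine ((((hasDerivAt_sin φ).fun_pow (2 * k + 1)).fun_mul (hasDerivAt_cos φ)).fun_div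
    (hasDerivAt_sqrt_add_sin_sq hz φ) hΔ.ne').congr_deriv ?_
  rw [Nat.add_sub_cancel]
  push_cast
  generalize √(z + sin φ ^ 2) = Δ at *
  field_simp
  linear_combination ((2 * k + 1) * sin φ ^ (2 * k) * Δ ^ 2 - sin φ ^ (2 * k + 2)) * hcos
    + sin φ ^ (2 * k) * (1 + z - sin φ ^ 2) * hΔ_sq

theorem ellipticMoment_succ (k : ℕ) (hz : 0 < z) :
    (2 * k + 1) * ellipticMoment (k + 1) z =
      (2 * k - z) * ellipticMoment k z - 2 * (1 + z) * (z * deriv (ellipticMoment k) z) := by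
  have hint_k := (intervalIntegrable_sin_pow_div_sqrt (2 * k) hz 0 (π / 2)).const_mul (2 * k - z)
  have hint_succ :=
    (intervalIntegrable_sin_pow_div_sqrt (2 * (k + 1)) hz 0 (π / 2)).const_mul (2 * k + 1)
  have hint_cube :=
    (intervalIntegrable_sin_pow_div_sqrt_pow (2 * k) 3 hz 0 (π / 2)).const_mul (z * (1 + z))
  have hftc := intervalIntegral.integral_eq_sub_of_hasDerivAt
    (fun φ _ => hasDerivAt_sin_pow_mul_cos_div_sqrt k hz φ) ((hint_k.sub hint_succ).add hint_cube)
  rw [intervalIntegral.integral_add (hint_k.sub hint_succ) hint_cube,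
    intervalIntegral.integral_sub hint_k hint_succ] at hftc
  simp only [intervalIntegral.integral_const_mul, cos_pi_div_two, sin_zero, ne_eq,
    Nat.add_eq_zero_iff, one_ne_zero, and_false, not_false_eq_true, zero_pow, mul_zero, zero_mul,
    zero_div, sub_zero] at hftc
  rw [deriv_ellipticMoment k hz, ellipticMoment, ellipticMoment]
  linear_combination -hftc

theorem integral_sin_pow_mul_sin_sq_div_sqrt_cube (k : ℕ) (hz : 0 < z) :
    ∫ φ in (0 : ℝ)..(π / 2), (sin φ ^ 2) ^ k * (sin φ ^ 2 / √(z + sin φ ^ 2) ^ 3) =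
      ellipticMoment k z + 2 * (z * deriv (ellipticMoment k) z) := by
  have hint_cube := (intervalIntegrable_sin_pow_div_sqrt_pow (2 * k) 3 hz 0 (π / 2)).const_mul z
  have hsplit (φ : ℝ) : (sin φ ^ 2) ^ k * (sin φ ^ 2 / √(z + sin φ ^ 2) ^ 3) =
      sin φ ^ (2 * k) / √(z + sin φ ^ 2) - z * (sin φ ^ (2 * k) / √(z + sin φ ^ 2) ^ 3) := by
    have hΔ_sq := sqrt_add_sq_sq hz (sin φ)
    rw [← pow_mul]
    field_simp
    linear_combination -sin φ ^ (2 * k) * hΔ_sq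
  simp only [hsplit]
  rw [intervalIntegral.integral_sub (intervalIntegrable_sin_pow_div_sqrt _ hz _ _) hint_cube,
    intervalIntegral.integral_const_mul, deriv_ellipticMoment k hz, ellipticMoment]
  ring

theorem isLogAnalytic_ellipticMoment (k : ℕ) : IsLogAnalytic (ellipticMoment k) := by
  induction k with
  | zero =>
    refine isLogAnalytic_integral_inv_sqrt_add_sin_sq.congr fun z _ => ?_
    simp only [ellipticMoment, mul_zero, pow_zero, one_div]
  | succ k ih =>
    refine ((ih.analytic_mul (g := fun z => (2 * k - z) / (2 * k + 1)) ?_).add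
      (ih.mul_deriv.analytic_mul (g := fun z => -2 * (1 + z) / (2 * k + 1)) ?_)).congr
        fun z hz => ?_
    · exact fun z _ => by fun_prop
    · exact fun z _ => by fun_prop
    · field_simp
      linear_combination ellipticMoment_succ k hz

theorem isLogAnalytic_integral_polynomial (p : Polynomial ℝ) :
    IsLogAnalytic fun z =>
      ∫ φ in (0 : ℝ)..(π / 2), p.eval (sin φ ^ 2) * (sin φ ^ 2 / √(z + sin φ ^ 2) ^ 3) := by
  induction p using Polynomial.induction_on' with
  | add p q hp hq =>
    refine (hp.add hq).congr fun z hz => ?_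
    have hint (r : Polynomial ℝ) : IntervalIntegrable
        (fun φ => r.eval (sin φ ^ 2) * (sin φ ^ 2 / √(z + sin φ ^ 2) ^ 3)) volume 0 (π / 2) :=
      ((r.continuous.comp (continuous_sin.pow 2)).mul (continuous_div_sqrt_add_sin_sq_pow
        (continuous_sin.pow 2) hz 3)).intervalIntegrable _ _
    simp only [Polynomial.eval_add, add_mul]
    exact intervalIntegral.integral_add (hint p) (hint q)
  | monomial k a =>
    have hmoment := (isLogAnalytic_ellipticMoment k).add
      ((isLogAnalytic_ellipticMoment k).mul_deriv.analytic_mul (analyticOnNhd_const (v := 2)))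
    refine (hmoment.analytic_mul (analyticOnNhd_const (v := a))).congr fun z hz => ?_
    simp only [Polynomial.eval_monomial, mul_assoc, intervalIntegral.integral_const_mul,
      integral_sin_pow_mul_sin_sq_div_sqrt_cube k hz]

end EllipticMoments

section FourierCoefficients

open MeasureTheory Set

theorem integral_zero_two_mul_eq_integral_add_reflect {E : Type*} [NormedAddCommGroup E]
    [NormedSpace ℝ E] {g : ℝ → E} {c : ℝ} (hg : IntervalIntegrable g volume 0 (2 * c)) :
    ∫ x in 0..(2 * c), g x = ∫ x in 0..c, (g x + g (2 * c - x)) := by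
  have hc : c ∈ uIcc 0 (2 * c) := by
    rcases le_total 0 c with h | h
    · exact mem_uIcc_of_le h (by linarith)
    · exact mem_uIcc_of_ge (by linarith) h
  have hleft : IntervalIntegrable g volume 0 c := hg.mono_set (uIcc_subset_uIcc_left hc)
  have hright : IntervalIntegrable g volume c (2 * c) := hg.mono_set (uIcc_subset_uIcc_right hc)
  have hreflect : IntervalIntegrable (fun x => g (2 * c - x)) volume 0 c := by
    have h := hright.comp_sub_left (2 * c)
    rw [sub_self, show 2 * c - c = c by ring] at h
    exact h.symm
  rw [intervalIntegral.integral_add hleft hreflect,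
    intervalIntegral.integral_comp_sub_left g (2 * c), sub_zero, show 2 * c - c = c by ring,
    intervalIntegral.integral_add_adjacent_intervals hleft hright]

theorem exp_neg_int_mul_add_exp_neg_int_mul_reflect (n : ℤ) (θ : ℝ) :
    Complex.exp (-Complex.I * n * θ) + Complex.exp (-Complex.I * n * (2 * π - θ : ℝ)) =
      ((2 * cos (n * θ) : ℝ) : ℂ) := by
  have hreflect : -Complex.I * n * (2 * π - θ : ℝ) =
      n * θ * Complex.I - n * (2 * π * Complex.I) := by
    push_cast
    ring
  rw [hreflect, Complex.exp_sub, Complex.exp_int_mul_two_pi_mul_I, div_one]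
  push_cast
  rw [Complex.two_cos, add_comm]
  ring_nf

theorem integral_exp_neg_int_mul_of_reflect (n : ℤ) {f : ℝ → ℝ}
    (hf : IntervalIntegrable f volume 0 (2 * π)) (hreflect : ∀ θ, f (2 * π - θ) = f θ) :
    ∫ θ in (0 : ℝ)..(2 * π), Complex.exp (-Complex.I * n * θ) * (f θ : ℂ) =
      ((4 * ∫ φ in (0 : ℝ)..(π / 2), cos (n * (2 * φ)) * f (2 * φ) : ℝ) : ℂ) := by
  have hint : IntervalIntegrable
      (fun θ : ℝ => Complex.exp (-Complex.I * n * θ) * (f θ : ℂ)) volume 0 (2 * π) :=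
    IntervalIntegrable.continuousOn_mul ⟨hf.1.ofReal, hf.2.ofReal⟩ (by fun_prop)
  have hsubst := intervalIntegral.integral_comp_mul_left (a := 0) (b := π / 2)
    (fun θ => cos (n * θ) * f θ) two_ne_zero
  rw [mul_zero, mul_div_cancel₀ _ two_ne_zero] at hsubst
  rw [integral_zero_two_mul_eq_integral_add_reflect hint, hsubst]
  simp only [hreflect, ← add_mul, exp_neg_int_mul_add_exp_neg_int_mul_reflect, ← Complex.ofReal_mul]
  simp only [intervalIntegral.integral_ofReal, mul_assoc, intervalIntegral.integral_const_mul,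
    smul_eq_mul]
  congr 1
  ring

theorem eval_sin_sq_chebyshev_comp (n : ℤ) (φ : ℝ) :
    ((Polynomial.Chebyshev.T ℝ n).comp (1 - 2 * Polynomial.X)).eval (sin φ ^ 2) =
      cos (n * (2 * φ)) := by
  have hcos : cos (2 * φ) = 1 - 2 * sin φ ^ 2 := by
    rw [cos_two_mul, cos_sq']
    ring
  rw [← Polynomial.Chebyshev.T_real_cos, hcos, Polynomial.eval_comp]
  simp

end FourierCoefficients

section Cone

open MeasureTheory Set

theorem inner_coneParam_sub_coneNormal (α t θ t' : ℝ) :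
    inner ℝ (coneParam α t θ - coneParam α t' 0) (coneNormal α θ) =
      sin α * cos α * t' * (1 - cos θ) := by
  simp only [coneParam, coneNormal, PiLp.inner_apply, Fin.sum_univ_three, PiLp.sub_apply,
    Matrix.cons_val, RCLike.inner_apply, conj_trivial, sin_zero, cos_zero]
  linear_combination sin α * cos α * t * sin_sq_add_cos_sq θ

theorem norm_coneParam_sub_coneParam (α t θ t' : ℝ) :
    ‖coneParam α t' 0 - coneParam α t θ‖ =
      √((t - t') ^ 2 + 2 * sin α ^ 2 * t * t' * (1 - cos θ)) := by
  rw [EuclideanSpace.norm_eq]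
  congr 1
  simp only [coneParam, Fin.sum_univ_three, PiLp.sub_apply, Matrix.cons_val, norm_eq_abs,
    sq_abs, sin_zero, cos_zero]
  linear_combination sin α ^ 2 * t ^ 2 * sin_sq_add_cos_sq θ
    + (t - t') ^ 2 * sin_sq_add_cos_sq α

theorem coneKernel_eq (α t θ t' : ℝ) :
    coneKernel α t θ t' 0 = sin α * cos α * t' * (1 - cos θ) /
      √((t - t') ^ 2 + 2 * sin α ^ 2 * t * t' * (1 - cos θ)) ^ 3 := by
  rw [coneKernel, inner_coneParam_sub_coneNormal, norm_coneParam_sub_coneParam]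

theorem coneKernel_two_mul {α t t' : ℝ} (hw : 0 < 4 * sin α ^ 2 * t' * t) (φ : ℝ) :
    coneKernel α t (2 * φ) t' 0 = 2 * sin α * cos α * t' / √(4 * sin α ^ 2 * t' * t) ^ 3 *
      (sin φ ^ 2 / √((t - t') ^ 2 / (4 * sin α ^ 2 * t' * t) + sin φ ^ 2) ^ 3) := by
  have hcos : 1 - cos (2 * φ) = 2 * sin φ ^ 2 := by
    rw [cos_two_mul, cos_sq']
    ring
  have hrad : (t - t') ^ 2 + 2 * sin α ^ 2 * t * t' * (2 * sin φ ^ 2) =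
      4 * sin α ^ 2 * t' * t * ((t - t') ^ 2 / (4 * sin α ^ 2 * t' * t) + sin φ ^ 2) := by
    rw [mul_add, mul_div_cancel₀ _ hw.ne']
    ring
  rw [coneKernel_eq, hcos, hrad, sqrt_mul hw.le, mul_pow]
  ring

theorem continuous_coneKernel {t t' : ℝ} (α : ℝ) (ht : 0 ≤ t * t') (htt' : t ≠ t') :
    Continuous fun θ => coneKernel α t θ t' 0 := by
  simp only [coneKernel_eq]
  refine Continuous.div (by fun_prop) (by fun_prop) fun θ => ?_
  have hsub : 0 < (t - t') ^ 2 := pow_two_pos_of_ne_zero (sub_ne_zero.2 htt')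
  have hcos : 0 ≤ 2 * sin α ^ 2 * t * t' * (1 - cos θ) := by
    have := sub_nonneg.2 (cos_le_one θ)
    rw [mul_assoc _ t]
    positivity
  exact (pow_pos (sqrt_pos.2 (add_pos_of_pos_of_nonneg hsub hcos)) 3).ne'

theorem coneKernel_reflect (α t θ t' : ℝ) :
    coneKernel α t (2 * π - θ) t' 0 = coneKernel α t θ t' 0 := by
  rw [coneKernel_eq, coneKernel_eq, cos_two_pi_sub]

theorem modalKernel_eq {α t t' : ℝ} (n : ℤ) (hα : sin α ≠ 0) (ht : 0 < t * t') (htt' : t ≠ t') :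
    modalKernel α n t t' = ((4 * sin α * cos α * t' / π / √(4 * sin α ^ 2 * t' * t) ^ 3 *
      ∫ φ in (0 : ℝ)..(π / 2),
        ((Polynomial.Chebyshev.T ℝ n).comp (1 - 2 * Polynomial.X)).eval (sin φ ^ 2) *
          (sin φ ^ 2 / √((t - t') ^ 2 / (4 * sin α ^ 2 * t' * t) + sin φ ^ 2) ^ 3) : ℝ) : ℂ) := by
  have hw : 0 < 4 * sin α ^ 2 * t' * t := by
    rw [mul_assoc, mul_comm t']
    positivity
  have hint := (continuous_coneKernel α ht.le htt').intervalIntegrable (μ := volume) 0 (2 * π)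
  rw [modalKernel, integral_exp_neg_int_mul_of_reflect n hint (coneKernel_reflect α t · t'),
    ← Complex.ofReal_mul]
  simp only [coneKernel_two_mul hw, eval_sin_sq_chebyshev_comp, mul_left_comm (cos _) (_ / _),
    intervalIntegral.integral_const_mul]
  congr 1
  field_simp

theorem inv_sqrt_pow_three_eq_exp {x : ℝ} (hx : 0 < x) :
    (√x ^ 3)⁻¹ = exp (-(3 / 2) * log x) := by
  rw [← exp_log (sqrt_pos.2 hx), log_sqrt hx.le, ← exp_nat_mul, ← exp_neg]
  congr 1
  push_cast
  ring

theorem analyticOnNhd_inv_sqrt_pow_three :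
    AnalyticOnNhd ℝ (fun x => (√x ^ 3)⁻¹) (Ioi 0) :=
  AnalyticOnNhd.congr isOpen_Ioi
    (fun _ hx => (analyticAt_const.mul (analyticAt_log hx)).rexp)
    fun _ hx => (inv_sqrt_pow_three_eq_exp hx).symm

theorem modalKernel_log_singularity_general {α t' : ℝ} (hα : sin α ≠ 0) (ht' : 0 < t') (n : ℤ) :
    ∃ G F : ℝ → ℝ, AnalyticOnNhd ℝ G (Ioi 0) ∧ AnalyticOnNhd ℝ F (Ioi 0) ∧
      ∀ t ∈ Ioi (0 : ℝ), t ≠ t' →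
        modalKernel α n t t' = ((G t * log |t' - t| + F t : ℝ) : ℂ) := by
  have hw : AnalyticOnNhd ℝ (fun t => 4 * sin α ^ 2 * t' * t) (Ioi 0) := fun t _ => by fun_prop
  have hw0 : ∀ t ∈ Ioi (0 : ℝ), 0 < 4 * sin α ^ 2 * t' * t := fun t (ht : 0 < t) => by positivity
  obtain ⟨G, F, hG, hF, hGF⟩ := (isLogAnalytic_integral_polynomial
    ((Polynomial.Chebyshev.T ℝ n).comp (1 - 2 * Polynomial.X))).comp_sq_div hw hw0 t'
  have hfactor := (analyticOnNhd_const (v := 4 * sin α * cos α * t' / π)).mul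
    (analyticOnNhd_inv_sqrt_pow_three.comp hw hw0)
  refine ⟨_, _, hfactor.mul hG, hfactor.mul hF, fun t ht htt' => ?_⟩
  rw [modalKernel_eq n hα (mul_pos ht ht') htt', hGF t ht htt']
  simp only [Function.comp_apply, div_eq_mul_inv]
  congr 1
  ring

end Cone

/-- Logarithmic singularity of `t ↦ K_n^α(t,1)` at `t = 1`: there are functions `G`
and `F`, real-analytic on `[1/2, 3/2]`, such that for `t ∈ [1/2, 3/2]`, `t ≠ 1`, one
has `K_n^α(t,1) = G(t) log|1−t| + F(t)`; i.e. `K_n^α(t,1) − G(t) log|1−t|` extends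
real-analytically (in particular `K_n^α(t,1)` is real-valued there). -/
theorem modalKernel_log_singularity (α : ℝ) (hα0 : 0 < α) (hαπ : α < π)
    (hα2 : α ≠ π / 2) (n : ℤ) :
    ∃ G F : ℝ → ℝ,
      AnalyticOnNhd ℝ G (Set.Icc (1 / 2) (3 / 2)) ∧
      AnalyticOnNhd ℝ F (Set.Icc (1 / 2) (3 / 2)) ∧
      ∀ t ∈ Set.Icc (1 / 2 : ℝ) (3 / 2), t ≠ 1 →
        modalKernel α n t 1 = ((G t * Real.log |1 - t| + F t : ℝ) : ℂ) := by
  obtain ⟨G, F, hG, hF, hGF⟩ :=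
    modalKernel_log_singularity_general (sin_pos_of_pos_of_lt_pi hα0 hαπ).ne' one_pos n
  have hsub : Set.Icc (1 / 2 : ℝ) (3 / 2) ⊆ Set.Ioi 0 :=
    fun t ht => one_half_pos.trans_le ht.1
  exact ⟨G, F, hG.mono hsub, hF.mono hsub, fun t ht => hGF t (hsub ht)⟩
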